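/- There is a constant C > 0 such that for every n ≥ 3, the diagonal online Ramsey number satisfies r̃(n,n) ≥ 2^((2−√2)n − C). -/

import Mathlib

open scoped Classical

namespace OnlineRamseyGame

/-- A valid Builder strategy: it never builds a loop, and along any play the
edges built are pairwise distinct. -/
def ValidBuilder {V : Type*} (B : List Bool → Sym2 V) : Prop :=
  (∀ h : List Bool, ¬ (B h).IsDiag) ∧
  ∀ h : List Bool, ∀ i : ℕ, i < h.length → B (h.take i) ≠ B h

/-- The history of Painter's colors after `t` turns against Painter strategy `P`
(Builder's moves are determined by this history). -/
def histOf (P : List Bool → Bool) : ℕ → List Bool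
  | 0 => []
  | t + 1 => histOf P t ++ [P (histOf P t)]

/-- The graph built by `edge` contains a monochromatic clique on `k` vertices in
color `col` within the first `N` turns. -/
def HasMonoClique {V : Type*} (edge : ℕ → Sym2 V) (color : ℕ → Bool)
    (N k : ℕ) (col : Bool) : Prop :=
  ∃ S : Finset V, S.card = k ∧
    ∀ u ∈ S, ∀ v ∈ S, u ≠ v → ∃ t, t < N ∧ edge t = s(u, v) ∧ color t = col

/-- Builder has a valid strategy winning the `(m,n)` online Ramsey game within `N`
turns against every Painter strategy (red = `true`, blue = `false`). -/
def BuilderWins (m n N : ℕ) : Prop :=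
  ∃ B : List Bool → Sym2 ℕ, ValidBuilder B ∧
    ∀ P : List Bool → Bool,
      HasMonoClique (fun t => B (histOf P t)) (fun t => P (histOf P t)) N m true ∨
      HasMonoClique (fun t => B (histOf P t)) (fun t => P (histOf P t)) N n false

/-- The online Ramsey number `r̃(m,n)`: the least `N` such that Builder can
guarantee a win within `N` turns. -/
noncomputable def onlineRamsey (m n : ℕ) : ℕ := sInf {N | BuilderWins m n N}



/-- Counting: adaptive tests. -/
theorem adaptive_count (col : Bool) (N : ℕ) : ∀ (r : ℕ) (test : List Bool → Prop),
    ((Finset.univ : Finset (Fin N → Bool)).filter (fun c =>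
      r ≤ ((Finset.range N).filter (fun t => test ((List.ofFn c).take t))).card ∧
      ∀ t (ht : t < N), test ((List.ofFn c).take t) → c ⟨t, ht⟩ = col)).card * 2 ^ r ≤ 2 ^ N := by
  induction N with
  | zero =>
    intro r test
    rcases r with _ | r
    · simp
    · simp
  | succ N ih =>
    intro r test
    set F := ((Finset.univ : Finset (Fin (N+1) → Bool)).filter (fun c =>
      r ≤ ((Finset.range (N+1)).filter (fun t => test ((List.ofFn c).take t))).card ∧
      ∀ t (ht : t < N+1), test ((List.ofFn c).take t) → c ⟨t, ht⟩ = col)) with hF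
    let G : ℕ → Bool → Finset (Fin N → Bool) := fun r b =>
      ((Finset.univ : Finset (Fin N → Bool)).filter (fun c =>
      r ≤ ((Finset.range N).filter (fun t => test (b :: (List.ofFn c).take t))).card ∧
      ∀ t (ht : t < N), test (b :: (List.ofFn c).take t) → c ⟨t, ht⟩ = col))
    have hG : ∀ r b, (G r b).card * 2 ^ r ≤ 2 ^ N := fun r b => ih r (fun l => test (b :: l))
    have hcnt : ∀ c : Fin (N+1) → Bool,
        ((Finset.range (N+1)).filter (fun t => test ((List.ofFn c).take t))).card
        = (if test [] then 1 else 0) + ((Finset.range N).filter (fun t => test (c 0 :: (List.ofFn (Fin.tail c)).take t))).card := by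
      intro c
      rw [Finset.card_filter, Finset.sum_range_succ', Finset.card_filter, add_comm]
      simp [List.ofFn_succ]
      rfl
    have hmem : ∀ c ∈ F, ∀ r', r' ≤ r - (if test [] then 1 else 0) → Fin.tail c ∈ G r' (c 0) := by
      intro c hc r' hr
      simp only [hF, Finset.mem_filter, Finset.mem_univ, true_and] at hc
      obtain ⟨h1, h2⟩ := hc
      rw [hcnt] at h1
      simp only [G, Finset.mem_filter, Finset.mem_univ, true_and]
      refine ⟨by omega, fun t ht htest => ?_⟩
      have := h2 (t+1) (by omega) (by rw [List.ofFn_succ]; exact htest)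
      simpa [Fin.tail] using this
    have hinj : ∀ c c' : Fin (N+1) → Bool, c 0 = c' 0 → Fin.tail c = Fin.tail c' → c = c' := by
      intro c c' h0 ht
      rw [← Fin.cons_self_tail c, ← Fin.cons_self_tail c', h0, ht]
    by_cases h : test []
    · have hc0 : ∀ c ∈ F, c 0 = col := by
        intro c hc
        simp only [hF, Finset.mem_filter, Finset.mem_univ, true_and] at hc
        exact hc.2 0 (by omega) (by simpa using h)
      have hle : F.card ≤ (G (r-1) col).card := by
        apply Finset.card_le_card_of_injOn Fin.tail
        · intro c hc
          have := hmem c hc (r-1) (by simp [h])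
          rwa [hc0 c hc] at this
        · intro c hc c' hc' hh
          exact hinj c c' ((hc0 c hc).trans (hc0 c' hc').symm) hh
      have h3 := hG (r-1) col
      calc F.card * 2 ^ r ≤ (G (r-1) col).card * 2 ^ ((r-1)+1) := by
            gcongr
            · norm_num
            · omega
        _ = (G (r-1) col).card * 2 ^ (r-1) * 2 := by ring
        _ ≤ 2 ^ N * 2 := by gcongr
        _ = _ := by ring
    · have hle : ∀ b, (F.filter (fun c => c 0 = b)).card ≤ (G r b).card := by
        intro b
        apply Finset.card_le_card_of_injOn Fin.tail
        · intro c hc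
          simp only [Finset.coe_filter, Set.mem_ofPred_eq] at hc
          have := hmem c hc.1 r (by simp [h])
          rwa [hc.2] at this
        · intro c hc c' hc' hh
          simp only [Finset.coe_filter, Set.mem_ofPred_eq] at hc hc'
          exact hinj c c' (hc.2.trans hc'.2.symm) hh
      have hs : F.card = (F.filter (fun c => c 0 = true)).card + (F.filter (fun c => c 0 = false)).card := by
        rw [← Finset.card_filter_add_card_filter_not (s := F) (fun c => c 0 = true)]
        simp
      have := hG r true
      have := hG r false
      have := Nat.mul_le_mul_right (2^r) (hle true)
      have := Nat.mul_le_mul_right (2^r) (hle false)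
      rw [hs, add_mul, pow_succ]
      omega

theorem finite_ramsey (a b : ℕ) : ∃ M : ℕ, ∀ (c : Sym2 ℕ → Bool) (X : Finset ℕ), M ≤ X.card →
    (∃ S ⊆ X, S.card = a ∧ ∀ u ∈ S, ∀ v ∈ S, u ≠ v → c s(u,v) = true) ∨
    (∃ S ⊆ X, S.card = b ∧ ∀ u ∈ S, ∀ v ∈ S, u ≠ v → c s(u,v) = false) := by
  induction a generalizing b with
  | zero => exact ⟨0, fun c X _ => Or.inl ⟨∅, by simp⟩⟩
  | succ a iha =>
    induction b with
    | zero => exact ⟨0, fun c X _ => Or.inr ⟨∅, by simp⟩⟩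
    | succ b ihb =>
      obtain ⟨M1, h1⟩ := iha (b+1)
      obtain ⟨M2, h2⟩ := ihb
      refine ⟨M1 + M2 + 1, fun c X hX => ?_⟩
      obtain ⟨x, hx⟩ : X.Nonempty := Finset.card_pos.1 (by omega)
      have hcard := Finset.card_filter_add_card_filter_not (s := X.erase x) (fun y => c s(x,y) = true)
      rw [Finset.card_erase_of_mem hx] at hcard
      have key : ∀ (col : Bool) (k : ℕ) (S : Finset ℕ), S ⊆ (X.erase x).filter (fun y => c s(x,y) = col) →
          S.card = k → (∀ u ∈ S, ∀ v ∈ S, u ≠ v → c s(u,v) = col) →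
          ∃ S ⊆ X, S.card = k+1 ∧ ∀ u ∈ S, ∀ v ∈ S, u ≠ v → c s(u,v) = col := by
        intro col k S hS hk hc
        have hS' : ∀ y ∈ S, y ≠ x ∧ y ∈ X ∧ c s(x,y) = col := by
          intro y hy
          have := hS hy
          simp at this
          tauto
        refine ⟨insert x S, ?_, ?_, ?_⟩
        · intro y hy
          rcases Finset.mem_insert.1 hy with rfl | hy
          · exact hx
          · exact (hS' y hy).2.1
        · rw [Finset.card_insert_of_notMem, hk]
          intro h
          exact (hS' x h).1 rfl
        · intro u hu v hv huv
          rcases Finset.mem_insert.1 hu with hu | hu <;> rcases Finset.mem_insert.1 hv with hv | hv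
          · exact absurd (hu.trans hv.symm) huv
          · rw [hu]; exact (hS' v hv).2.2
          · rw [hv, Sym2.eq_swap]; exact (hS' u hu).2.2
          · exact hc u hu v hv huv
      have hsub : ∀ (p : ℕ → Prop) [DecidablePred p], (X.erase x).filter p ⊆ X := fun p _ =>
        (Finset.filter_subset _ _).trans (Finset.erase_subset _ _)
      by_cases hM : M1 ≤ ((X.erase x).filter (fun y => c s(x,y) = true)).card
      · rcases h1 c _ hM with ⟨S, hS, hk, hc⟩ | ⟨S, hS, hk, hc⟩
        · exact Or.inl (key true a S hS hk hc)
        · exact Or.inr ⟨S, hS.trans (hsub _), hk, hc⟩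
      · have hM2 : M2 ≤ ((X.erase x).filter (fun y => c s(x,y) = false)).card := by
          simp only [Bool.not_eq_true] at hcard
          omega
        rcases h2 c _ hM2 with ⟨S, hS, hk, hc⟩ | ⟨S, hS, hk, hc⟩
        · exact Or.inl ⟨S, hS.trans (hsub _), hk, hc⟩
        · exact Or.inr (key false b S hS hk hc)


theorem two_pow_lt {a b s t : ℕ} (hab : a ≠ b) (ha : a < max s t) (hb : b < max s t) :
    2 ^ a + 2 ^ b < 2 ^ s + 2 ^ t := by
  wlog hst : s ≤ t generalizing s t
  · have := this (s := t) (t := s) (by rwa [max_comm]) (by rwa [max_comm]) (by omega)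
    omega
  rw [max_eq_right hst] at ha hb
  wlog h : a < b generalizing a b
  · have := this (a := b) (b := a) hab.symm hb ha (by omega)
    omega
  have h1 : 2 ^ a < 2 ^ b := Nat.pow_lt_pow_right (by norm_num) h
  have h2 : 2 ^ (b+1) ≤ 2 ^ t := Nat.pow_le_pow_right (by norm_num) hb
  have h3 : 0 < 2 ^ s := by positivity
  rw [pow_succ] at h2
  omega

/-- Structural lemma: revelation times for the vertices of a clique. -/
theorem reveal_structure (S : Finset ℕ) (n k : ℕ) (hn : S.card = n) (hn2 : 2 ≤ n) (hk : 2 * k ≤ n)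
    (τ : Sym2 ℕ → ℕ)
    (hτ : ∀ e ∈ S.offDiag.image Sym2.mk.uncurry, ∀ e' ∈ S.offDiag.image Sym2.mk.uncurry, τ e = τ e' → e = e') :
    ∃ ρ : ℕ → ℕ, (∀ v ∈ S, ∃ w ∈ S, v ≠ w ∧ ρ v = τ s(v,w)) ∧ (S.image ρ).card ≤ n - k ∧
      ((S.offDiag.image Sym2.mk.uncurry).filter (fun e => ¬ ∀ v ∈ e, ρ v < τ e)).card ≤ k * k + (n - 2 * k) := by
  have hE : ∀ u v, s(u,v) ∈ S.offDiag.image Sym2.mk.uncurry ↔ u ∈ S ∧ v ∈ S ∧ u ≠ v := by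
    intro u v
    simp only [Finset.mem_image, Finset.mem_offDiag, Prod.exists, Function.uncurry_apply_pair]
    constructor
    · rintro ⟨a, b, h, h2⟩
      rcases Sym2.eq_iff.1 h2 with ⟨rfl, rfl⟩ | ⟨rfl, rfl⟩
      · exact h
      · exact ⟨h.2.1, h.1, h.2.2.symm⟩
    · intro h
      exact ⟨u, v, h, rfl⟩
  set E := S.offDiag.image Sym2.mk.uncurry with hEdef
  -- first neighbour
  have hg : ∀ v ∈ S, ∃ w ∈ S, v ≠ w ∧ ∀ y ∈ S, v ≠ y → τ s(v,w) ≤ τ s(v,y) := by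
    intro v hv
    have : (S.erase v).Nonempty := by
      apply Finset.card_pos.1
      rw [Finset.card_erase_of_mem hv]; omega
    obtain ⟨w, hw, hmin⟩ := Finset.exists_min_image (S.erase v) (fun y => τ s(v,y)) this
    rw [Finset.mem_erase] at hw
    exact ⟨w, hw.2, hw.1.symm, fun y hy hvy => hmin y (Finset.mem_erase.2 ⟨hvy.symm, hy⟩)⟩
  choose! g hgS hgne hgmin using hg
  -- optimal matching
  let Adm : Set (Fin k × Bool → ℕ) := {x | Function.Injective x ∧ ∀ p, x p ∈ S}
  let T : (Fin k × Bool → ℕ) → Fin k → ℕ := fun x i => τ s(x (i, false), x (i, true))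
  let wt : (Fin k × Bool → ℕ) → ℕ := fun x => ∑ i, 2 ^ (T x i)
  have hAdm : Adm.Nonempty := by
    have : Nonempty (Fin k × Bool ↪ S) := by
      apply Function.Embedding.nonempty_of_card_le
      simp [hn]; omega
    obtain ⟨f⟩ := this
    exact ⟨fun p => f p, fun p q h => f.injective (Subtype.ext h), fun p => (f p).2⟩
  obtain ⟨x, ⟨hxinj, hxS⟩, hxmin⟩ : ∃ x ∈ Adm, ∀ y ∈ Adm, wt x ≤ wt y := by
    refine ⟨Function.argminOn wt Adm hAdm, Function.argminOn_mem wt Adm hAdm, fun y hy => ?_⟩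
    exact Function.argminOn_le wt Adm hy
  have hT : ∀ (y : Fin k × Bool → ℕ) i p, T y i = τ s(y (i, p), y (i, !p)) := by
    intro y i p
    cases p
    · rfl
    · simp only [T]; rw [Sym2.eq_swap]; rfl
  have hxE : ∀ p q, p ≠ q → s(x p, x q) ∈ E := fun p q h =>
    (hE _ _).2 ⟨hxS p, hxS q, fun h' => h (hxinj h')⟩
  have hTE : ∀ i p e, e ∈ E → τ e = T x i → e = s(x (i,p), x (i,!p)) := by
    intro i p e he h
    rw [hT x i p] at h
    exact hτ _ he _ (hxE _ _ (by simp)) h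
  -- exchange 1
  have ex1 : ∀ v ∈ S, (∀ q, x q ≠ v) → ∀ i p, T x i < τ s(v, x (i,p)) := by
    intro v hv hvx i p
    by_contra hlt
    have hne : τ s(v, x (i,p)) ≠ T x i := by
      intro h
      have := hTE i p _ ((hE _ _).2 ⟨hv, hxS _, (hvx _).symm⟩) h
      have : v ∈ s(x (i,p), x (i,!p)) := this ▸ Sym2.mem_mk_left _ _
      rcases Sym2.mem_iff.1 this with h | h
      · exact hvx _ h.symm
      · exact hvx _ h.symm
    have hlt : τ s(v, x (i,p)) < T x i := by omega
    let y := Function.update x (i, !p) v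
    have hy : y ∈ Adm := by
      constructor
      · intro q q' h
        simp only [y, Function.update_apply] at h
        split_ifs at h with h1 h2 h2
        · rw [h1, h2]
        · exact absurd h.symm (hvx _)
        · exact absurd h (hvx _)
        · exact hxinj h
      · intro q
        simp only [y, Function.update_apply]
        split_ifs
        · exact hv
        · exact hxS q
    have h1 : wt y < wt x := by
      apply Finset.sum_lt_sum
      · intro j _
        by_cases hj : j = i
        · subst hj
          rw [hT y j p]
          have : s(y (j,p), y (j, !p)) = s(v, x (j,p)) := by
            simp [y, Sym2.eq_swap]
          rw [this]
          exact Nat.pow_le_pow_right (by norm_num) hlt.le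
        · simp [T, y, hj]
      · refine ⟨i, Finset.mem_univ _, ?_⟩
        rw [hT y i p]
        have : s(y (i,p), y (i, !p)) = s(v, x (i,p)) := by
          simp [y, Sym2.eq_swap]
        rw [this]
        exact Nat.pow_lt_pow_right (by norm_num) hlt
    exact absurd (hxmin y hy) (by omega)
  -- exchange 2
  have ex2 : ∀ i j p q, i ≠ j → τ s(x (i,p), x (j,q)) ≤ max (T x i) (T x j) →
      τ s(x (i,!p), x (j,!q)) ≤ max (T x i) (T x j) → False := by
    intro i j p q hij h1 h2
    have hnei : ∀ p q l, τ s(x (i,p), x (j,q)) ≠ T x l := by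
      intro p q l h
      have := hTE l true _ (hxE (i,p) (j,q) (by simp [hij])) h
      rcases Sym2.eq_iff.1 this with ⟨h1, h2⟩ | ⟨h1, h2⟩
      · have h1 := hxinj h1
        have h2 := hxinj h2
        simp at h1 h2
        exact hij (h1.1.trans h2.1.symm)
      · have h1 := hxinj h1
        have h2 := hxinj h2
        simp at h1 h2
        exact hij (h1.1.trans h2.1.symm)
    have hne : τ s(x (i,p), x (j,q)) ≠ τ s(x (i,!p), x (j,!q)) := by
      intro h
      have := hτ _ (hxE (i,p) (j,q) (by simp [hij])) _ (hxE (i,!p) (j,!q) (by simp [hij])) h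
      rcases Sym2.eq_iff.1 this with ⟨h1, h2⟩ | ⟨h1, h2⟩
      · have h1 := hxinj h1
        simp at h1
      · have h1 := hxinj h1
        simp at h1
        exact hij h1.1
    have h1' : τ s(x (i,p), x (j,q)) < max (T x i) (T x j) := by
      have := hnei p q i; have := hnei p q j; omega
    have h2' : τ s(x (i,!p), x (j,!q)) < max (T x i) (T x j) := by
      have := hnei (!p) (!q) i; have := hnei (!p) (!q) j; omega
    have hlt := two_pow_lt hne h1' h2'
    let y := x ∘ Equiv.swap (i, !p) (j, q)
    have hy : y ∈ Adm := ⟨hxinj.comp (Equiv.injective _), fun p => hxS _⟩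
    have hyi : T y i = τ s(x (i,p), x (j,q)) := by
      rw [hT y i p]
      have e1 : y (i,p) = x (i,p) := by
        simp only [y, Function.comp]
        rw [Equiv.swap_apply_of_ne_of_ne] <;> simp [hij]
      have e2 : y (i,!p) = x (j,q) := by simp [y]
      rw [e1, e2]
    have hyj : T y j = τ s(x (i,!p), x (j,!q)) := by
      rw [hT y j q]
      have e1 : y (j,!q) = x (j,!q) := by
        simp only [y, Function.comp]
        rw [Equiv.swap_apply_of_ne_of_ne] <;> simp [hij.symm]
      have e2 : y (j,q) = x (i,!p) := by simp [y]
      rw [e1, e2]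
    have hyl : ∀ l, l ≠ i → l ≠ j → T y l = T x l := by
      intro l hi hj
      have : ∀ b, y (l,b) = x (l,b) := by
        intro b
        simp only [y, Function.comp]
        rw [Equiv.swap_apply_of_ne_of_ne] <;> simp [hi, hj]
      simp only [T, this]
    have hdec : ∀ z, wt z = (2 ^ T z i + 2 ^ T z j) + ∑ l ∈ (Finset.univ.erase i).erase j, 2 ^ T z l := by
      intro z
      simp only [wt]
      rw [← Finset.add_sum_erase Finset.univ _ (Finset.mem_univ i),
        ← Finset.add_sum_erase (Finset.univ.erase i) _ (Finset.mem_erase.2 ⟨hij.symm, Finset.mem_univ j⟩), add_assoc]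
    have h3 := hxmin y hy
    rw [hdec x, hdec y, hyi, hyj] at h3
    have : ∑ l ∈ (Finset.univ.erase i).erase j, 2 ^ T y l = ∑ l ∈ (Finset.univ.erase i).erase j, 2 ^ T x l := by
      apply Finset.sum_congr rfl
      intro l hl
      simp only [Finset.mem_erase] at hl
      rw [hyl l hl.2.1 hl.1]
    omega
  -- reveal function
  let V := Finset.univ.image x
  have hVcard : V.card = 2 * k := by
    rw [Finset.card_image_of_injective _ hxinj]; simp [mul_comm]
  have hVS : V ⊆ S := by
    intro v hv
    obtain ⟨p, _, rfl⟩ := Finset.mem_image.1 hv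
    exact hxS p
  let W := S \ V
  have hWcard : W.card = n - 2 * k := by
    rw [Finset.card_sdiff_of_subset hVS, hn, hVcard]
  have hW : ∀ v, v ∈ W ↔ v ∈ S ∧ ∀ q, x q ≠ v := by
    intro v; simp [W, V]
  let ρ : ℕ → ℕ := fun v => if h : ∃ q, x q = v then T x h.choose.1 else τ s(v, g v)
  have hρx : ∀ q, ρ (x q) = T x q.1 := by
    intro q
    have h : ∃ q', x q' = x q := ⟨q, rfl⟩
    simp only [ρ, dif_pos h]
    rw [hxinj h.choose_spec]
  have hρW : ∀ v ∈ W, ρ v = τ s(v, g v) := by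
    intro v hv
    have : ¬ ∃ q, x q = v := by
      rintro ⟨q, h⟩; exact ((hW v).1 hv).2 q h
    simp only [ρ, dif_neg this]
  have hcase : ∀ v ∈ S, v ∈ W ∨ ∃ i p, v = x (i,p) := by
    intro v hv
    by_cases h : ∃ q, x q = v
    · obtain ⟨⟨i,p⟩, rfl⟩ := h; exact Or.inr ⟨i, p, rfl⟩
    · exact Or.inl ((hW v).2 ⟨hv, fun q hq => h ⟨q, hq⟩⟩)
  refine ⟨ρ, ?_, ?_, ?_⟩
  · intro v hv
    rcases hcase v hv with h | ⟨i, p, rfl⟩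
    · exact ⟨g v, hgS v hv, hgne v hv, hρW v h⟩
    · refine ⟨x (i, !p), hxS _, fun h => ?_, ?_⟩
      · have := hxinj h; simp at this
      · rw [hρx, hT x i p]
  · have : S.image ρ ⊆ Finset.univ.image (T x) ∪ W.image ρ := by
      intro t ht
      obtain ⟨v, hv, rfl⟩ := Finset.mem_image.1 ht
      rcases hcase v hv with h | ⟨i, p, rfl⟩
      · exact Finset.mem_union_right _ (Finset.mem_image_of_mem _ h)
      · exact Finset.mem_union_left _ (by rw [hρx]; exact Finset.mem_image_of_mem _ (Finset.mem_univ _))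
    have h1 := Finset.card_le_card this
    have h2 := Finset.card_union_le (Finset.univ.image (T x)) (W.image ρ)
    have h3 : (Finset.univ.image (T x)).card ≤ k := by
      simpa using Finset.card_image_le (s := Finset.univ) (f := T x)
    have h4 : (W.image ρ).card ≤ W.card := Finset.card_image_le
    omega
  · set U := E.filter (fun e => ¬ ∀ v ∈ e, ρ v < τ e) with hU
    let D : Fin k × Fin k → Finset (Sym2 ℕ) := fun ij =>
      if ij.1 = ij.2 then {s(x (ij.1, false), x (ij.1, true))}
      else if ij.1 < ij.2 then {s(x (ij.1,false), x (ij.2,false)), s(x (ij.1,true), x (ij.2,true))}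
      else {s(x (ij.1,false), x (ij.2,true)), s(x (ij.1,true), x (ij.2,false))}
    have hUx : ∀ i j p q, s(x (i,p), x (j,q)) ∈ U → τ s(x (i,p), x (j,q)) ≤ max (T x i) (T x j) := by
      intro i j p q h
      by_contra hlt
      refine (Finset.mem_filter.1 h).2 fun v hv => ?_
      rcases Sym2.mem_iff.1 hv with rfl | rfl <;> rw [hρx] <;> simp only <;> omega
    have hDU : ∀ ij, (D ij ∩ U).card ≤ 1 := by
      rintro ⟨i, j⟩
      have aux : ∀ p q, i ≠ j → (({s(x (i,p), x (j,q)), s(x (i,!p), x (j,!q))} : Finset (Sym2 ℕ)) ∩ U).card ≤ 1 := by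
        intro p q hij
        rw [Finset.card_le_one]
        intro a ha b hb
        simp only [Finset.mem_inter, Finset.mem_insert, Finset.mem_singleton] at ha hb
        rcases ha with ⟨rfl | rfl, ha⟩ <;> rcases hb with ⟨rfl | rfl, hb⟩
        · rfl
        · exact (ex2 i j p q hij (hUx _ _ _ _ ha) (hUx _ _ _ _ hb)).elim
        · exact (ex2 i j p q hij (hUx _ _ _ _ hb) (hUx _ _ _ _ ha)).elim
        · rfl
      simp only [D]
      split_ifs with h1 h2
      · exact (Finset.card_le_card Finset.inter_subset_left).trans (by simp)
      · exact aux false false h1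
      · exact aux false true h1
    have hsub : U ⊆ (Finset.univ.biUnion fun ij => D ij ∩ U) ∪ W.image (fun v => s(v, g v)) := by
      -- unmatched vertices
      have hWy : ∀ v ∈ W, ∀ y, s(v,y) ∈ U → s(v,y) ∈ W.image (fun v => s(v, g v)) := by
        intro v hv y hvy
        have hvyE := (hE _ _).1 (Finset.mem_filter.1 hvy).1
        obtain ⟨hvS, hyS, hne⟩ := hvyE
        by_contra hcon
        have first : ∀ v ∈ W, ∀ y ∈ S, v ≠ y → s(v,y) ∉ W.image (fun v => s(v, g v)) → ρ v < τ s(v,y) := by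
          intro v hv y hy hne hcon
          have hvS := ((hW v).1 hv).1
          have h1 := hgmin v hvS y hy hne
          rw [hρW v hv]
          refine lt_of_le_of_ne h1 fun h => hcon ?_
          have := hτ _ ((hE _ _).2 ⟨hvS, hgS v hvS, hgne v hvS⟩) _ ((hE _ _).2 ⟨hvS, hy, hne⟩) h
          rw [← this]
          exact Finset.mem_image_of_mem (fun v => s(v, g v)) hv
        refine (Finset.mem_filter.1 hvy).2 fun z hz => ?_
        rcases Sym2.mem_iff.1 hz with rfl | rfl
        · exact first z hv y hyS hne hcon
        · rcases hcase z hyS with h | ⟨i, p, rfl⟩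
          · rw [Sym2.eq_swap]
            exact first z h v hvS hne.symm (by rwa [Sym2.eq_swap])
          · rw [hρx]
            exact ex1 v hvS ((hW v).1 hv).2 i p
      intro e he
      induction e using Sym2.ind with
      | _ a b =>
      have habE := (hE _ _).1 (Finset.mem_filter.1 he).1
      obtain ⟨haS, hbS, hne⟩ := habE
      rcases hcase a haS with h | ⟨i, p, rfl⟩
      · exact Finset.mem_union_right _ (hWy a h b he)
      rcases hcase b hbS with h | ⟨j, q, rfl⟩
      · rw [Sym2.eq_swap] at he ⊢
        exact Finset.mem_union_right _ (hWy b h _ he)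
      apply Finset.mem_union_left
      have aux : ∀ i j p q, i < j → s(x (i,p), x (j,q)) ∈ D (if p = q then (i,j) else (j,i)) := by
        intro i j p q hij
        have h1 := hij.ne
        have h2 := hij.ne'
        have h3 := hij.not_gt
        cases p <;> cases q <;> simp [D, h1, h2, h3, hij, Sym2.eq_swap]
      suffices ∃ ij, s(x (i,p), x (j,q)) ∈ D ij by
        obtain ⟨ij, h⟩ := this
        exact Finset.mem_biUnion.2 ⟨ij, Finset.mem_univ _, Finset.mem_inter.2 ⟨h, he⟩⟩
      rcases lt_trichotomy i j with h | h | h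
      · exact ⟨_, aux i j p q h⟩
      · subst h
        refine ⟨(i,i), ?_⟩
        cases p <;> cases q <;> simp [D, Sym2.eq_swap] at hne ⊢
      · rw [Sym2.eq_swap]
        exact ⟨_, aux j i q p h⟩
    have h1 := Finset.card_le_card hsub
    have h2 := Finset.card_union_le (Finset.univ.biUnion fun ij => D ij ∩ U) (W.image (fun v => s(v, g v)))
    have h3 : (Finset.univ.biUnion fun ij => D ij ∩ U).card ≤ k * k := by
      have := Finset.card_biUnion_le_card_mul (Finset.univ : Finset (Fin k × Fin k)) (fun ij => D ij ∩ U) 1 (fun ij _ => hDU ij)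
      simpa using this
    have h4 : (W.image (fun v => s(v, g v))).card ≤ W.card := Finset.card_image_le
    omega

theorem histOf_length (P : List Bool → Bool) (t : ℕ) : (histOf P t).length = t := by
  induction t with
  | zero => rfl
  | succ t ih => simp [histOf, ih]

theorem exists_builderWins (m n : ℕ) : ∃ N, BuilderWins m n N := by
  obtain ⟨M, hM⟩ := finite_ramsey m n
  have hinf : Infinite {e : Sym2 ℕ // ¬ e.IsDiag} := by
    apply Infinite.of_injective (fun k : ℕ => (⟨s(0, k+1), by simp⟩ : {e : Sym2 ℕ // ¬ e.IsDiag}))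
    intro a b h
    simpa using h
  obtain ⟨d⟩ := nonempty_denumerable {e : Sym2 ℕ // ¬ e.IsDiag}
  let φ : {e : Sym2 ℕ // ¬ e.IsDiag} ≃ ℕ := Denumerable.eqv _
  let ψ : Sym2 ℕ → ℕ := fun e => if h : e.IsDiag then 0 else φ ⟨e, h⟩
  refine ⟨((Finset.range M).sym2.sup ψ) + 1, fun h => (φ.symm h.length).1, ⟨fun h => (φ.symm h.length).2, ?_⟩, ?_⟩
  · intro h i hi heq
    have := φ.symm.injective (Subtype.ext heq)
    simp at this
    omega
  · intro P
    have key : ∀ (col : Bool) (k : ℕ), (∃ S ⊆ Finset.range M, S.card = k ∧ ∀ u ∈ S, ∀ v ∈ S, u ≠ v →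
        P (histOf P (ψ s(u,v))) = col) →
        HasMonoClique (fun t => (φ.symm (histOf P t).length).1) (fun t => P (histOf P t))
          (((Finset.range M).sym2.sup ψ) + 1) k col := by
      rintro col k ⟨S, hS, hk, hc⟩
      refine ⟨S, hk, fun u hu v hv huv => ⟨ψ s(u,v), ?_, ?_, hc u hu v hv huv⟩⟩
      · apply Nat.lt_succ_of_le
        apply Finset.le_sup (f := ψ)
        exact Finset.mk_mem_sym2_iff.2 ⟨hS hu, hS hv⟩
      · simp [histOf_length, ψ, huv]
    rcases hM (fun e => P (histOf P (ψ e))) (Finset.range M) (by simp) with h | h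
    · exact Or.inl (key _ _ h)
    · exact Or.inr (key _ _ h)

/-- `v` has been revealed by the code `cd` by the time of history `h`. -/
def Revealed (B : List Bool → Sym2 ℕ) {q N : ℕ} (cd : Fin q → Fin N × Bool × Bool)
    (h : List Bool) (v : ℕ) : Prop :=
  ∃ j, ((cd j).1 : ℕ) < h.length ∧
    (((cd j).2.1 = true ∧ v = (B (h.take (cd j).1)).inf) ∨
     ((cd j).2.2 = true ∧ v = (B (h.take (cd j).1)).sup))

/-- The edge built after `h` joins two revealed vertices. -/
def Test (B : List Bool → Sym2 ℕ) {q N : ℕ} (cd : Fin q → Fin N × Bool × Bool)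
    (h : List Bool) : Prop := ∀ v ∈ B h, Revealed B cd h v

/-- Colour sequences which pass all tests of the code. -/
noncomputable def Good (B : List Bool → Sym2 ℕ) (N q r : ℕ) (col : Bool)
    (cd : Fin q → Fin N × Bool × Bool) : Finset (Fin N → Bool) :=
  (Finset.univ : Finset (Fin N → Bool)).filter (fun c =>
      r ≤ ((Finset.range N).filter (fun t => Test B cd ((List.ofFn c).take t))).card ∧
      ∀ t (ht : t < N), Test B cd ((List.ofFn c).take t) → c ⟨t, ht⟩ = col)

theorem mem_good_of_clique (B : List Bool → Sym2 ℕ) (hB : ValidBuilder B) (N n k : ℕ) (hn : 2 ≤ n)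
    (hk : 2 * k ≤ n) (col : Bool) (c : Fin N → Bool) (S : Finset ℕ) (hS : S.card = n)
    (hc : ∀ u ∈ S, ∀ v ∈ S, u ≠ v → ∃ t, ∃ ht : t < N, B ((List.ofFn c).take t) = s(u,v) ∧ c ⟨t, ht⟩ = col) :
    ∃ cd : Fin (n - k) → Fin N × Bool × Bool,
      c ∈ Good B N (n - k) (n.choose 2 - (k * k + (n - 2 * k))) col cd := by
  set l := List.ofFn c with hl
  have hlen : l.length = N := by simp [hl]
  have hinj' : ∀ t t', t < t' → t' < N → B (l.take t) ≠ B (l.take t') := by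
    intro t t' h h' heq
    have := hB.2 (l.take t') t (by simp [hlen]; omega)
    rw [List.take_take, min_eq_left h.le] at this
    exact this heq
  have hinj : ∀ t t', t < N → t' < N → B (l.take t) = B (l.take t') → t = t' := by
    intro t t' h h' heq
    rcases lt_trichotomy t t' with h1 | h1 | h1
    · exact absurd heq (hinj' _ _ h1 h')
    · exact h1
    · exact absurd heq.symm (hinj' _ _ h1 h)
  have hmemE : ∀ u v, s(u,v) ∈ S.offDiag.image Sym2.mk.uncurry ↔ u ∈ S ∧ v ∈ S ∧ u ≠ v := by
    intro u v
    simp only [Finset.mem_image, Finset.mem_offDiag, Prod.exists, Function.uncurry_apply_pair]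
    constructor
    · rintro ⟨a, b, h, h2⟩
      rcases Sym2.eq_iff.1 h2 with ⟨rfl, rfl⟩ | ⟨rfl, rfl⟩
      · exact h
      · exact ⟨h.2.1, h.1, h.2.2.symm⟩
    · intro h
      exact ⟨u, v, h, rfl⟩
  have hτ0 : ∀ e ∈ S.offDiag.image Sym2.mk.uncurry, ∃ t, t < N ∧ B (l.take t) = e ∧ ∀ ht : t < N, c ⟨t, ht⟩ = col := by
    intro e he
    induction e using Sym2.ind with
    | _ a b =>
    obtain ⟨ha, hb, hab⟩ := (hmemE a b).1 he
    obtain ⟨t, ht, h1, h2⟩ := hc a ha b hb hab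
    exact ⟨t, ht, h1, fun _ => h2⟩
  choose! τ hτN hτB hτc using hτ0
  have hτinj : ∀ e ∈ S.offDiag.image Sym2.mk.uncurry, ∀ e' ∈ S.offDiag.image Sym2.mk.uncurry, τ e = τ e' → e = e' := by
    intro e he e' he' h
    rw [← hτB e he, ← hτB e' he', h]
  obtain ⟨ρ, hρ, hρcard, hbad⟩ := reveal_structure S n k hS hn hk τ hτinj
  set E := S.offDiag.image Sym2.mk.uncurry with hE
  have hSne : S.Nonempty := Finset.card_pos.1 (by omega)
  have hρe : ∀ v ∈ S, ρ v < N ∧ v ∈ B (l.take (ρ v)) := by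
    intro v hv
    obtain ⟨w, hw, hvw, h⟩ := hρ v hv
    have he := (hmemE v w).2 ⟨hv, hw, hvw⟩
    rw [h, hτB _ he]
    exact ⟨hτN _ he, Sym2.mem_mk_left _ _⟩
  -- enumerate the times
  obtain ⟨θ, hθ⟩ : ∃ θ : Fin (n - k) → ℕ, Set.range θ = ↑(S.image ρ) := by
    obtain ⟨t0, ht0⟩ := hSne.image ρ
    let eqv := (S.image ρ).equivFin
    refine ⟨fun j => if h : j.1 < (S.image ρ).card then (eqv.symm ⟨j.1, h⟩).1 else t0, ?_⟩
    ext t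
    constructor
    · rintro ⟨j, rfl⟩
      simp only
      split_ifs with h
      · exact (eqv.symm ⟨j.1, h⟩).2
      · exact ht0
    · intro ht
      refine ⟨⟨(eqv ⟨t, ht⟩).1, lt_of_lt_of_le (eqv ⟨t, ht⟩).2 hρcard⟩, ?_⟩
      simp
  have hθN : ∀ j, θ j < N := by
    intro j
    have : θ j ∈ (S.image ρ : Set ℕ) := hθ ▸ Set.mem_range_self j
    obtain ⟨v, hv, h⟩ := Finset.mem_image.1 (Finset.mem_coe.1 this)
    rw [← h]; exact (hρe v hv).1
  let cd : Fin (n - k) → Fin N × Bool × Bool := fun j => (⟨θ j, hθN j⟩,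
    decide ((B (l.take (θ j))).inf ∈ S ∧ ρ (B (l.take (θ j))).inf = θ j),
    decide ((B (l.take (θ j))).sup ∈ S ∧ ρ (B (l.take (θ j))).sup = θ j))
  have hrev : ∀ t, t < N → ∀ v, Revealed B cd (l.take t) v ↔ v ∈ S ∧ ρ v < t := by
    intro t ht v
    have hlt : (l.take t).length = t := by simp [hlen]; omega
    unfold Revealed
    rw [hlt]
    constructor
    · rintro ⟨j, hj, h⟩
      simp only [cd] at hj h
      rw [List.take_take, min_eq_left hj.le] at h
      rcases h with ⟨h1, rfl⟩ | ⟨h1, rfl⟩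
      · have h1 := of_decide_eq_true h1
        exact ⟨h1.1, h1.2.trans_lt hj⟩
      · have h1 := of_decide_eq_true h1
        exact ⟨h1.1, h1.2.trans_lt hj⟩
    · rintro ⟨hv, hlt⟩
      have : ρ v ∈ Set.range θ := by rw [hθ]; exact Finset.mem_coe.2 (Finset.mem_image_of_mem _ hv)
      obtain ⟨j, hj⟩ := this
      refine ⟨j, by simpa [cd, hj] using hlt, ?_⟩
      simp only [cd]
      rw [List.take_take, hj, min_eq_left hlt.le]
      have hmem := (hρe v hv).2
      have : v = (B (l.take (ρ v))).inf ∨ v = (B (l.take (ρ v))).sup := by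
        generalize B (l.take (ρ v)) = e at hmem
        induction e using Sym2.ind with
        | _ a b =>
        rcases Sym2.mem_iff.1 hmem with rfl | rfl <;> simp <;> omega
      rcases this with h | h
      · left
        refine ⟨decide_eq_true ?_, h⟩
        rw [← h]; exact ⟨hv, rfl⟩
      · right
        refine ⟨decide_eq_true ?_, h⟩
        rw [← h]; exact ⟨hv, rfl⟩
  refine ⟨cd, ?_⟩
  simp only [Good, Finset.mem_filter, Finset.mem_univ, true_and]
  rw [← hl]
  constructor
  · have hEcard : E.card = n.choose 2 := by
      rw [hE, ← hS]; exact Sym2.card_image_offDiag S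
    have hsplit := Finset.card_filter_add_card_filter_not (s := E) (fun e => ∀ v ∈ e, ρ v < τ e)
    have hle : (E.filter (fun e => ∀ v ∈ e, ρ v < τ e)).card ≤
        ((Finset.range N).filter (fun t => Test B cd (l.take t))).card := by
      apply Finset.card_le_card_of_injOn τ
      · intro e he
        have he := Finset.mem_filter.1 (Finset.mem_coe.1 he)
        apply Finset.mem_coe.2
        refine Finset.mem_filter.2 ⟨Finset.mem_range.2 (hτN e he.1), ?_⟩
        intro v hv
        rw [hτB e he.1] at hv
        rw [hrev _ (hτN e he.1)]
        refine ⟨?_, he.2 v hv⟩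
        have heE := he.1
        clear he
        induction e using Sym2.ind with
        | _ a b =>
        obtain ⟨ha, hb, -⟩ := (hmemE a b).1 heE
        rcases Sym2.mem_iff.1 hv with rfl | rfl
        · exact ha
        · exact hb
      · intro e he e' he' h
        exact hτinj e (Finset.mem_filter.1 (Finset.mem_coe.1 he)).1 e' (Finset.mem_filter.1 (Finset.mem_coe.1 he')).1 h
    omega
  · intro t ht htest
    have heE : B (l.take t) ∈ E := by
      have hd := hB.1 (l.take t)
      have hm : ∀ v ∈ B (l.take t), v ∈ S := fun v hv => ((hrev t ht v).1 (htest v hv)).1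
      generalize B (l.take t) = e at hd hm
      induction e using Sym2.ind with
      | _ a b =>
      exact (hmemE a b).2 ⟨hm a (Sym2.mem_mk_left _ _), hm b (Sym2.mem_mk_right _ _), by simpa using hd⟩
    have : τ (B (l.take t)) = t := hinj _ _ (hτN _ heE) ht (hτB _ heE)
    have h2 := hτc _ heE
    rw [this] at h2
    exact h2 ht

theorem builderWins_bound (N n k : ℕ) (hn : 2 ≤ n) (hk : 2 * k ≤ n) (h : BuilderWins n n N) :
    2 ^ (n.choose 2 - (k * k + (n - 2 * k))) ≤ 2 * (4 * N) ^ (n - k) := by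
  obtain ⟨B, hB, hwin⟩ := h
  set r := n.choose 2 - (k * k + (n - 2 * k)) with hr
  have hcover : (Finset.univ : Finset (Fin N → Bool)) ⊆
      (Finset.univ : Finset (Bool × (Fin (n - k) → Fin N × Bool × Bool))).biUnion
        (fun z => Good B N (n - k) r z.1 z.2) := by
    intro c _
    let P : List Bool → Bool := fun h => (List.ofFn c).getD h.length false
    have hhist : ∀ t, t ≤ N → histOf P t = (List.ofFn c).take t := by
      intro t
      induction t with
      | zero => intro _; simp [histOf]
      | succ t ih =>
        intro ht
        have hlt : t < (List.ofFn c).length := by simp; omega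
        rw [histOf, ih (by omega), List.take_succ_eq_append_getElem hlt]
        congr 2
        simp only [P, List.length_take]
        rw [min_eq_left hlt.le, List.getD_eq_getElem _ _ hlt]
    have key : ∀ col, HasMonoClique (fun t => B (histOf P t)) (fun t => P (histOf P t)) N n col →
        ∃ cd : Fin (n - k) → Fin N × Bool × Bool, c ∈ Good B N (n - k) r col cd := by
      rintro col ⟨S, hS, hc⟩
      apply mem_good_of_clique B hB N n k hn hk col c S hS
      intro u hu v hv huv
      obtain ⟨t, ht, h1, h2⟩ := hc u hu v hv huv
      refine ⟨t, ht, ?_, ?_⟩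
      · rw [← hhist t ht.le]; exact h1
      · have hlt : t < (List.ofFn c).length := by simpa using ht
        simp only [P, histOf_length] at h2
        rw [List.getD_eq_getElem _ _ hlt] at h2
        simpa using h2
    rcases hwin P with h | h
    · obtain ⟨cd, hcd⟩ := key _ h
      exact Finset.mem_biUnion.2 ⟨(true, cd), Finset.mem_univ _, hcd⟩
    · obtain ⟨cd, hcd⟩ := key _ h
      exact Finset.mem_biUnion.2 ⟨(false, cd), Finset.mem_univ _, hcd⟩
  have h1 := Finset.card_le_card hcover
  have h2 := h1.trans Finset.card_biUnion_le
  have h3 : (2 ^ N) * 2 ^ r ≤ (2 * (4 * N) ^ (n - k)) * 2 ^ N := by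
    calc (2 ^ N) * 2 ^ r = (Finset.univ : Finset (Fin N → Bool)).card * 2 ^ r := by simp
      _ ≤ (∑ z : Bool × (Fin (n - k) → Fin N × Bool × Bool), (Good B N (n - k) r z.1 z.2).card) * 2 ^ r := by
          gcongr
      _ = ∑ z : Bool × (Fin (n - k) → Fin N × Bool × Bool), (Good B N (n - k) r z.1 z.2).card * 2 ^ r := by
          rw [Finset.sum_mul]
      _ ≤ ∑ z : Bool × (Fin (n - k) → Fin N × Bool × Bool), 2 ^ N := by
          apply Finset.sum_le_sum
          intro z _
          exact adaptive_count z.1 N r (Test B z.2)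
      _ = (2 * (4 * N) ^ (n - k)) * 2 ^ N := by
          simp only [Finset.sum_const, smul_eq_mul, Finset.card_univ, Fintype.card_prod, Fintype.card_bool,
            Fintype.card_fun, Fintype.card_fin]
          ring
  have h4 : 0 < 2 ^ N := by positivity
  nlinarith

theorem stmt1 :
    ∃ C : ℝ, 0 < C ∧ ∀ n : ℕ, 3 ≤ n →
      (2 : ℝ) ^ ((2 - Real.sqrt 2) * (n : ℝ) - C) ≤ (onlineRamsey n n : ℝ) := by
  refine ⟨12, by norm_num, fun n hn => ?_⟩
  have hwin : BuilderWins n n (onlineRamsey n n) := Nat.sInf_mem (exists_builderWins n n)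
  generalize onlineRamsey n n = N at hwin
  set s := Real.sqrt 2 with hs
  have hs2 : s ^ 2 = 2 := Real.sq_sqrt (by norm_num)
  have hs0 : 0 ≤ s := Real.sqrt_nonneg 2
  have hs1 : 1.4 ≤ s := by
    by_contra h; push Not at h; nlinarith
  have hs3 : s ≤ 1.5 := by
    by_contra h; push Not at h; nlinarith
  have hnR : (3 : ℝ) ≤ n := by exact_mod_cast hn
  obtain ⟨α, hα⟩ : ∃ α : ℝ, α = 1 - s / 2 := ⟨_, rfl⟩
  have hα0 : 0 ≤ α := by linarith
  have hα1 : α ≤ 0.3 := by linarith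
  have hαq : 1 / 2 - α ^ 2 = 2 * α * (1 - α) := by subst hα; nlinarith
  obtain ⟨k, hk⟩ : ∃ k : ℕ, k = ⌊α * n⌋₊ := ⟨_, rfl⟩
  have hk1 : (k : ℝ) ≤ α * n := hk ▸ Nat.floor_le (by positivity)
  have hk2 : α * n < k + 1 := hk ▸ Nat.lt_floor_add_one _
  have h2kR : 2 * (k : ℝ) ≤ n := by nlinarith
  have h2k : 2 * k ≤ n := by exact_mod_cast h2kR
  have hb := builderWins_bound N n k (by omega) h2k hwin
  set r := n.choose 2 - (k * k + (n - 2 * k)) with hr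
  have hrR : (n : ℝ) * (n - 1) / 2 - (k * k + (n - 2 * k)) ≤ r := by
    have h1 : n.choose 2 ≤ r + (k * k + (n - 2 * k)) := by omega
    have h2 : ((n.choose 2 : ℕ) : ℝ) ≤ r + (k * k + (n - 2 * k)) := by
      have : ((n - 2 * k : ℕ) : ℝ) = n - 2 * k := by push_cast [Nat.cast_sub h2k]; ring
      rw [← this]; exact_mod_cast h1
    rw [Nat.cast_choose_two] at h2
    linarith
  have hnk : ((n - k : ℕ) : ℝ) = n - k := by
    rw [Nat.cast_sub (by omega)]
  have hexp : (2 * α * n - 10) * ((n - k : ℕ) : ℝ) ≤ (r : ℝ) - 1 := by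
    rw [hnk]
    have hkk : (k : ℝ) * k ≤ (α * n) * (α * n) := mul_self_le_mul_self (by positivity) hk1
    have e1 : 2 * α * n * (n - k) ≤ 2 * α * n * ((1 - α) * n + 1) := by
      apply mul_le_mul_of_nonneg_left _ (by positivity)
      linarith
    have e2 : (1 / 2 - α ^ 2) * (n : ℝ) ^ 2 = 2 * α * (1 - α) * (n : ℝ) ^ 2 := by rw [hαq]
    have e3 : α * n ≤ 0.3 * n := by gcongr
    have e4 : (0 : ℝ) ≤ k := by positivity
    nlinarith
  have hreal : (2 : ℝ) ^ r ≤ 2 * (4 * (N : ℝ)) ^ (n - k) := by exact_mod_cast hb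
  have hpow : ((2 : ℝ) ^ (2 * α * n - 10)) ^ (n - k) ≤ (4 * (N : ℝ)) ^ (n - k) := by
    rw [← Real.rpow_natCast, ← Real.rpow_mul (by norm_num)]
    calc (2 : ℝ) ^ ((2 * α * n - 10) * ((n - k : ℕ) : ℝ)) ≤ (2 : ℝ) ^ ((r : ℝ) - 1) :=
          Real.rpow_le_rpow_of_exponent_le (by norm_num) hexp
      _ = 2 ^ r / 2 := by rw [Real.rpow_sub (by norm_num), Real.rpow_natCast, Real.rpow_one]
      _ ≤ _ := by linarith
  have hfin : (2 : ℝ) ^ (2 * α * n - 10) ≤ 4 * (N : ℝ) :=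
    le_of_pow_le_pow_left₀ (by omega) (by positivity) hpow
  have : (2 - s) * (n : ℝ) - 12 = (2 * α * n - 10) - 2 := by rw [hα]; ring
  rw [this, Real.rpow_sub (by norm_num)]
  norm_num
  linarith

end OnlineRamseyGame
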